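/- Let S(1,r) be the signed double star consisting of a positive central edge z₁z₂, together with 1 positive pendant edge z₁v₁ and two negative pendant edges z₁u₁, z₁u₂ attached at z₁, and r positive pendant edges z₂w₁,…,z₂w_r attached at z₂ (so S(1,r) is a (r+5, r+2, 2) signed graph). If r ≥ 5, then S(1,r) is not additively graceful. -/

import Mathlib

/-- A signed graph on vertex type `V`: a finite set of positive edges and a
finite set of negative edges, disjoint from one another, with no loops. -/
structure SignedGraph (V : Type) [DecidableEq V] where
  posEdges : Finset (Sym2 V)
  negEdges : Finset (Sym2 V)
  disjoint : Disjoint posEdges negEdges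
  pos_not_diag : ∀ e ∈ posEdges, ¬ e.IsDiag
  neg_not_diag : ∀ e ∈ negEdges, ¬ e.IsDiag

/-- Induced label on a positive edge: `|f u - f v|`. -/
def posLabel {V : Type} (f : V → ℕ) : Sym2 V → ℕ :=
  Sym2.lift ⟨fun u v => Nat.dist (f u) (f v), fun u v => Nat.dist_comm _ _⟩

/-- Induced label on a negative edge: `f u + f v`. -/
def negLabel {V : Type} (f : V → ℕ) : Sym2 V → ℕ :=
  Sym2.lift ⟨fun u v => f u + f v, fun u v => Nat.add_comm _ _⟩

/-- `f` is an additively graceful labeling of the signed graph `S`: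
it is an injection into `{0, 1, …, m + ⌈(n+1)/2⌉}` whose induced labels on the
positive edges are exactly `{1, …, m}` and on the negative edges exactly
`{1, …, n}`, where `m` (resp. `n`) is the number of positive (negative) edges.
(Note that `⌈(n+1)/2⌉ = (n+2)/2` with natural-number division.) -/
def IsAddGraceful {V : Type} [DecidableEq V] (S : SignedGraph V) (f : V → ℕ) : Prop :=
  Function.Injective f ∧
  (∀ v : V, f v ≤ S.posEdges.card + (S.negEdges.card + 2) / 2) ∧
  S.posEdges.image (posLabel f) = Finset.Icc 1 S.posEdges.card ∧
  S.negEdges.image (negLabel f) = Finset.Icc 1 S.negEdges.card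

/-- Vertex type of a double star: the two centers `z₁, z₂`, the `a` positive
pendant neighbours and `b` negative pendant neighbours of `z₁`, and the `c`
positive pendant neighbours of `z₂`. -/
abbrev DSV (a b c : ℕ) : Type := (Unit ⊕ Unit) ⊕ (Fin a ⊕ Fin b ⊕ Fin c)

/-- the first central vertex `z₁` -/
def z1 {a b c : ℕ} : DSV a b c := Sum.inl (Sum.inl ())
/-- the second central vertex `z₂` -/
def z2 {a b c : ℕ} : DSV a b c := Sum.inl (Sum.inr ())
/-- the end `vᵢ` of the `i`-th positive pendant edge at `z₁` -/
def vv {a b c : ℕ} (i : Fin a) : DSV a b c := Sum.inr (Sum.inl i)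
/-- the end `uᵢ` of the `i`-th negative pendant edge at `z₁` -/
def uu {a b c : ℕ} (i : Fin b) : DSV a b c := Sum.inr (Sum.inr (Sum.inl i))
/-- the end `wᵢ` of the `i`-th positive pendant edge at `z₂` -/
def ww {a b c : ℕ} (i : Fin c) : DSV a b c := Sum.inr (Sum.inr (Sum.inr i))

/-- The signed double star with a *positive* central edge `z₁z₂`,
`a` positive and `b` negative pendant edges at `z₁`, and `c` positive pendant
edges at `z₂`. -/
def doubleStarPos (a b c : ℕ) : SignedGraph (DSV a b c) where
  posEdges :=
    {s(z1, z2)} ∪ Finset.univ.image (fun i : Fin a => s(z1, vv i)) ∪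
      Finset.univ.image (fun i : Fin c => s(z2, ww i))
  negEdges := Finset.univ.image (fun i : Fin b => s(z1, uu i))
  disjoint := by
    rw [Finset.disjoint_left]
    intro e he1 he2
    simp only [Finset.mem_union, Finset.mem_singleton, Finset.mem_image,
      Finset.mem_univ, true_and] at he1 he2
    obtain ⟨j, rfl⟩ := he2
    rcases he1 with (h | ⟨i, h⟩) | ⟨i, h⟩ <;>
      simp [z1, z2, vv, uu, ww, Sym2.eq_iff] at h
  pos_not_diag := by
    intro e he
    simp only [Finset.mem_union, Finset.mem_singleton, Finset.mem_image,
      Finset.mem_univ, true_and] at he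
    rcases he with (rfl | ⟨i, rfl⟩) | ⟨i, rfl⟩ <;>
      simp [z1, z2, vv, ww, Sym2.mk_isDiag_iff]
  neg_not_diag := by
    intro e he
    simp only [Finset.mem_image, Finset.mem_univ, true_and] at he
    obtain ⟨i, rfl⟩ := he
    simp [z1, uu, Sym2.mk_isDiag_iff]

/-!
If `z₁` has `b ≥ 2` negative pendant neighbours, then `f z₁ = 0`, so these neighbours take the
values `1, …, b` and every other vertex has a value above `b`. Put `A = f z₂`. The positive edges
at `z₁` are then labelled by `A` and by the values of the positive pendant neighbours of `z₁`, while
an edge `z₂wᵢ` has label less than `A - b` or at most `m + ⌈(b + 1) / 2⌉ - A`, where `m` is the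
number of positive edges. Hence every label beyond both bounds, in particular `m`, is the value of
`z₂` or of a `vᵢ`.

For a single positive pendant neighbour `v` of `z₁`, so that `m = r + 2`, this pins down the large
labels. If `A = r + 2`, then `r + 1` and `r` would both be `f v`. So `f v = r + 2`, and either
`A = r + 1` and nothing produces `r`, or `b = 2`, `A = 3`, and producing `r - 1` needs a `wᵢ` with
value `r + 2 = f v`.
-/

theorem card_negEdges_doubleStarPos (a b c : ℕ) : (doubleStarPos a b c).negEdges.card = b := by
  have hu : Function.Injective fun i : Fin b => s((z1 : DSV a b c), uu i) := fun i j h => by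
    simpa [z1, uu] using h
  simp [doubleStarPos, Finset.card_image_of_injective _ hu]

theorem mem_posEdges_doubleStarPos {a b c : ℕ} {e : Sym2 (DSV a b c)} :
    e ∈ (doubleStarPos a b c).posEdges ↔
      e = s(z1, z2) ∨ (∃ i, e = s(z1, vv i)) ∨ ∃ i, e = s(z2, ww i) := by
  simp [doubleStarPos, eq_comm]

theorem card_posEdges_doubleStarPos (a b c : ℕ) :
    (doubleStarPos a b c).posEdges.card = a + c + 1 := by
  have hv : Function.Injective fun i : Fin a => s((z1 : DSV a b c), vv i) := fun i j h => by
    simpa [z1, vv] using h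
  have hw : Function.Injective fun i : Fin c => s((z2 : DSV a b c), ww i) := fun i j h => by
    simpa [z2, ww] using h
  unfold doubleStarPos
  rw [Finset.card_union_of_disjoint, Finset.card_union_of_disjoint,
    Finset.card_image_of_injective _ hv, Finset.card_image_of_injective _ hw,
    Finset.card_singleton, Finset.card_fin, Finset.card_fin]
  · lia
  · simp [z1, z2, vv]
  · simp [Finset.disjoint_left, z1, z2, vv, ww]

namespace IsAddGraceful

section SignedGraph

variable {V : Type} [DecidableEq V] {S : SignedGraph V} {f : V → ℕ} {k : ℕ}

theorem posLabel_le (h : IsAddGraceful S f) {e : Sym2 V} (he : e ∈ S.posEdges) :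
    posLabel f e ≤ S.posEdges.card :=
  (Finset.mem_Icc.mp (h.2.2.1 ▸ Finset.mem_image_of_mem (posLabel f) he)).2

theorem exists_posLabel_eq (h : IsAddGraceful S f) (hk₁ : 1 ≤ k) (hk : k ≤ S.posEdges.card) :
    ∃ e ∈ S.posEdges, posLabel f e = k :=
  Finset.mem_image.mp (h.2.2.1 ▸ Finset.mem_Icc.mpr ⟨hk₁, hk⟩)

theorem exists_negLabel_eq (h : IsAddGraceful S f) (hk₁ : 1 ≤ k) (hk : k ≤ S.negEdges.card) :
    ∃ e ∈ S.negEdges, negLabel f e = k :=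
  Finset.mem_image.mp (h.2.2.2 ▸ Finset.mem_Icc.mpr ⟨hk₁, hk⟩)

end SignedGraph

section DoubleStar

variable {a b c : ℕ} {f : DSV a b c → ℕ} {k : ℕ}

theorem apply_le (h : IsAddGraceful (doubleStarPos a b c) f) (x : DSV a b c) :
    f x ≤ a + c + 1 + (b + 2) / 2 := by
  simpa only [card_posEdges_doubleStarPos, card_negEdges_doubleStarPos] using h.2.1 x

theorem exists_z1_add_uu_eq (h : IsAddGraceful (doubleStarPos a b c) f) (hk₁ : 1 ≤ k)
    (hk : k ≤ b) : ∃ i, f z1 + f (uu i) = k := by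
  obtain ⟨e, he, rfl⟩ := h.exists_negLabel_eq hk₁ (by rwa [card_negEdges_doubleStarPos])
  obtain ⟨i, -, rfl⟩ := Finset.mem_image.mp he
  exact ⟨i, rfl⟩

theorem z1_eq_zero (h : IsAddGraceful (doubleStarPos a b c) f) (hb : 2 ≤ b) : f z1 = 0 := by
  obtain ⟨i, hi⟩ := h.exists_z1_add_uu_eq le_rfl (by lia)
  obtain ⟨j, hj⟩ := h.exists_z1_add_uu_eq one_le_two hb
  -- Otherwise `f z1 = 1`, and the label `2` gives `f (uu j) = 1` as well.
  have hne : f z1 ≠ f (uu j) := h.1.ne (by simp [z1, uu])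
  lia

theorem lt_apply (h : IsAddGraceful (doubleStarPos a b c) f) (hb : 2 ≤ b) {x : DSV a b c}
    (hz : x ≠ z1) (hu : ∀ i, x ≠ uu i) : b < f x := by
  have hz1 := h.z1_eq_zero hb
  have hx : f x ≠ f z1 := h.1.ne hz
  by_contra! hle
  obtain ⟨i, hi⟩ := h.exists_z1_add_uu_eq (k := f x) (by lia) hle
  exact hu i (h.1 (by lia))

theorem lt_z2 (h : IsAddGraceful (doubleStarPos a b c) f) (hb : 2 ≤ b) : b < f z2 :=
  h.lt_apply hb (by simp [z1, z2]) (by simp [z2, uu])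

theorem lt_ww (h : IsAddGraceful (doubleStarPos a b c) f) (hb : 2 ≤ b) (i : Fin c) :
    b < f (ww i) :=
  h.lt_apply hb (by simp [z1, ww]) (by simp [ww, uu])

theorem z2_le (h : IsAddGraceful (doubleStarPos a b c) f) (hb : 2 ≤ b) : f z2 ≤ a + c + 1 := by
  simpa [posLabel, Nat.dist, h.z1_eq_zero hb, card_posEdges_doubleStarPos] using
    h.posLabel_le (mem_posEdges_doubleStarPos.mpr (.inl rfl))

theorem posLabel_cases (h : IsAddGraceful (doubleStarPos a b c) f) (hb : 2 ≤ b) (hk₁ : 1 ≤ k)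
    (hk : k ≤ a + c + 1) :
    f z2 = k ∨ (∃ i, f (vv i) = k) ∨ ∃ i, f (ww i) = f z2 + k ∨ f (ww i) + k = f z2 := by
  obtain ⟨e, he, hek⟩ := h.exists_posLabel_eq hk₁ (by rwa [card_posEdges_doubleStarPos])
  rcases mem_posEdges_doubleStarPos.mp he with rfl | ⟨i, rfl⟩ | ⟨i, rfl⟩
  · exact .inl (by simpa [posLabel, Nat.dist, h.z1_eq_zero hb] using hek)
  · exact .inr (.inl ⟨i, by simpa [posLabel, Nat.dist, h.z1_eq_zero hb] using hek⟩)
  · simp only [posLabel, Sym2.lift_mk, Nat.dist] at hek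
    exact .inr (.inr ⟨i, by lia⟩)

theorem z2_eq_or_exists_vv_eq (h : IsAddGraceful (doubleStarPos a b c) f) (hb : 2 ≤ b)
    (hk : k ≤ a + c + 1) (hk_below : f z2 ≤ b + k)
    (hk_above : a + c + 1 + (b + 2) / 2 < f z2 + k) : f z2 = k ∨ ∃ i, f (vv i) = k := by
  have hk₁ : 1 ≤ k := by
    have := h.apply_le z2
    lia
  rcases h.posLabel_cases hb hk₁ hk with hz2 | hvv | ⟨i, hw | hw⟩
  · exact .inl hz2
  · exact .inr hvv
  · have := h.apply_le (ww i)
    lia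
  · have := h.lt_ww hb i
    lia

end DoubleStar

section OnePosPendant

variable {b r k : ℕ} {f : DSV 1 b r → ℕ}

theorem z2_eq_or_vv_eq (h : IsAddGraceful (doubleStarPos 1 b r) f) (hb : 2 ≤ b)
    (hk : k ≤ r + 2) (hk_below : f z2 ≤ b + k) (hk_above : r + 2 + (b + 2) / 2 < f z2 + k) :
    f z2 = k ∨ f (vv 0) = k := by
  simpa only [Fin.exists_fin_one] using
    h.z2_eq_or_exists_vv_eq hb (by lia) hk_below (by lia)

theorem vv_eq (h : IsAddGraceful (doubleStarPos 1 b r) f) (hb : 2 ≤ b) (hr : 4 ≤ r) :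
    f (vv 0) = r + 2 := by
  have hlt := h.lt_z2 hb
  have hle := h.z2_le hb
  refine (h.z2_eq_or_vv_eq hb le_rfl (by lia) (by lia)).resolve_left fun hz2 => ?_
  have h_succ : f (vv 0) = r + 1 :=
    (h.z2_eq_or_vv_eq hb (by lia) (by lia) (by lia)).resolve_left (by lia)
  have h_self : f (vv 0) = r :=
    (h.z2_eq_or_vv_eq hb (by lia) (by lia) (by lia)).resolve_left (by lia)
  lia

theorem z2_ne_add_one (h : IsAddGraceful (doubleStarPos 1 b r) f) (hb : 2 ≤ b) (hr : 5 ≤ r) :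
    f z2 ≠ r + 1 := fun hz2 => by
  have hlt := h.lt_z2 hb
  have hv := h.vv_eq hb (by lia)
  have := h.z2_eq_or_vv_eq (k := r) hb (by lia) (by lia) (by lia)
  lia

theorem z2_eq_three (h : IsAddGraceful (doubleStarPos 1 b r) f) (hb : 2 ≤ b) (hr : 5 ≤ r) :
    f z2 = 3 := by
  have hlt := h.lt_z2 hb
  have hle := h.z2_le hb
  have hv := h.vv_eq hb (by lia)
  have hz2 := h.z2_ne_add_one hb hr
  by_contra hne
  have := h.z2_eq_or_vv_eq (k := r + 1) hb (by lia) (by lia) (by lia)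
  lia

end OnePosPendant

end IsAddGraceful

theorem doubleStar_twoNeg_l1_not_addGraceful_general (b r : ℕ) (hb : 2 ≤ b) (hr : 5 ≤ r) :
    ¬ ∃ f : DSV 1 b r → ℕ, IsAddGraceful (doubleStarPos 1 b r) f := by
  rintro ⟨f, h⟩
  have hv : f (vv 0) = r + 2 := h.vv_eq hb (by lia)
  have hz2 : f z2 = 3 := h.z2_eq_three hb hr
  rcases h.posLabel_cases hb (k := r - 1) (by lia) (by lia) with hk | ⟨i, hk⟩ | ⟨i, hw | hw⟩
  · lia
  · rw [Subsingleton.elim i 0] at hk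
    lia
  · have hwv : f (ww i) ≠ f (vv 0) := h.1.ne (by simp [ww, vv])
    lia
  · lia

/-- The signed double star with positive central edge `z₁z₂`,
`1` positive and `2` negative pendant edges at `z₁`, and `r` positive pendant
edges at `z₂`, is not additively graceful when `r ≥ 5`. -/
theorem doubleStar_twoNeg_l1_not_addGraceful (r : ℕ) (hr : 5 ≤ r) :
    ¬ ∃ f : DSV 1 2 r → ℕ, IsAddGraceful (doubleStarPos 1 2 r) f :=
  doubleStar_twoNeg_l1_not_addGraceful_general 2 r le_rfl hr
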